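/- Let y ∈ ℝ^p, let δ ∈ ℝ^p satisfy ⟨x − y, δ⟩ ≤ 0 for ν-almost every x, set H = {x ∈ ℝ^p : ⟨x − y, δ⟩ = 0}, and assume ν(H) > 0. Then for every θ ∈ Θ and every x ∈ ℝ^p the density exp(⟨x, θ + sδ⟩ − c(θ + sδ)) converges as s → ∞ to: 0 if ⟨x − y, δ⟩ < 0; exp(⟨x, θ⟩ − c(θ))/μ_θ(H) if ⟨x − y, δ⟩ = 0; and +∞ if ⟨x − y, δ⟩ > 0. -/

import Mathlib

open MeasureTheory Real Filter Topology Set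
open scoped RealInnerProductSpace ENNReal

/-- The normalizing integral (Laplace transform) `∫ exp⟪x, θ⟫ dν(x)` as an `ℝ≥0∞`-valued
lower integral; `θ` lies in the natural parameter space iff this is finite. -/
noncomputable def partitionFn {p : ℕ} (ν : Measure (EuclideanSpace ℝ (Fin p)))
    (θ : EuclideanSpace ℝ (Fin p)) : ℝ≥0∞ :=
  ∫⁻ x, ENNReal.ofReal (Real.exp ⟪x, θ⟫) ∂ν

/-- The cumulant function `c(θ) = log ∫ exp⟪x, θ⟫ dν(x)` (real-valued; meaningful on the
natural parameter space `{θ | partitionFn ν θ < ⊤}`). -/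
noncomputable def cumulant {p : ℕ} (ν : Measure (EuclideanSpace ℝ (Fin p)))
    (θ : EuclideanSpace ℝ (Fin p)) : ℝ :=
  Real.log (partitionFn ν θ).toReal

/-- The extended-real-valued cumulant function, equal to `⊤` off the natural parameter space. -/
noncomputable def ecumulant {p : ℕ} (ν : Measure (EuclideanSpace ℝ (Fin p)))
    (θ : EuclideanSpace ℝ (Fin p)) : EReal :=
  if partitionFn ν θ = ⊤ then ⊤ else ((cumulant ν θ : ℝ) : EReal)

/-- The member of the full exponential family generated by `ν` with natural parameter `θ`:
the measure with density `x ↦ exp(⟪x, θ⟫ − c(θ))` with respect to `ν`. -/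
noncomputable def expFam {p : ℕ} (ν : Measure (EuclideanSpace ℝ (Fin p)))
    (θ : EuclideanSpace ℝ (Fin p)) : Measure (EuclideanSpace ℝ (Fin p)) :=
  ν.withDensity fun x => ENNReal.ofReal (Real.exp (⟪x, θ⟫ - cumulant ν θ))

/-- `K` is the convex support of `ν`: the smallest closed convex set of full `ν`-measure. -/
def IsConvexSupport {p : ℕ} (ν : Measure (EuclideanSpace ℝ (Fin p)))
    (K : Set (EuclideanSpace ℝ (Fin p))) : Prop :=
  IsClosed K ∧ Convex ℝ K ∧ ν Kᶜ = 0 ∧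
    ∀ C : Set (EuclideanSpace ℝ (Fin p)), IsClosed C → Convex ℝ C → ν Cᶜ = 0 → K ⊆ C

/-!
Tilting turns the problem into one about moment generating functions: with `μ` the member of the
family at `θ` and `X = ⟪· - y, δ⟫`, the density at `θ + sδ` is the density at `θ` times
`exp (s * X x) / mgf X μ s`. Since `X ≤ 0` almost surely, dominated convergence gives
`mgf X μ s → μ {X = 0}`, a positive limit, so the sign of `X x` alone decides the behaviour.
-/

section Tilting

open ProbabilityTheory (mgf)

variable {Ω : Type*} [MeasurableSpace Ω]

lemma tendsto_exp_mul_atTop_nhds_zero {b : ℝ} (hb : b < 0) :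
    Tendsto (fun t : ℝ => exp (t * b)) atTop (𝓝 0) :=
  tendsto_exp_atBot.comp (tendsto_id.atTop_mul_const_of_neg hb)

lemma tendsto_mgf_atTop_of_ae_nonpos {μ : Measure Ω} [IsFiniteMeasure μ] {X : Ω → ℝ}
    (hX : AEMeasurable X μ) (hX_nonpos : ∀ᵐ ω ∂μ, X ω ≤ 0) :
    Tendsto (mgf X μ) atTop (𝓝 (μ.real {ω | X ω = 0})) := by
  have hmeas : NullMeasurableSet {ω | X ω = 0} μ :=
    hX.nullMeasurableSet_preimage (measurableSet_singleton 0)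
  have hlim : ∫ ω, {ω | X ω = 0}.indicator (fun _ => (1 : ℝ)) ω ∂μ = μ.real {ω | X ω = 0} := by
    rw [integral_indicator₀ hmeas, setIntegral_const, smul_eq_mul, mul_one]
  rw [← hlim]
  refine tendsto_integral_filter_of_norm_le_const ?_ ⟨1, ?_⟩ ?_
  · exact Eventually.of_forall fun t => (hX.const_mul t).exp.aestronglyMeasurable
  · filter_upwards [eventually_ge_atTop 0] with t ht
    filter_upwards [hX_nonpos] with ω hω
    rw [norm_of_nonneg (exp_nonneg _), exp_le_one_iff]
    exact mul_nonpos_of_nonneg_of_nonpos ht hω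
  · filter_upwards [hX_nonpos] with ω hω
    rcases hω.lt_or_eq with hneg | hzero
    · simpa only [indicator_of_notMem (show ω ∉ {ω | X ω = 0} from hneg.ne)]
        using tendsto_exp_mul_atTop_nhds_zero hneg
    · simp [hzero]

lemma exp_sub_log_integral_exp_add_mul {ν : Measure Ω} {f T : Ω → ℝ} (a : ℝ) {s : ℝ}
    (hs : 0 < mgf (fun ω => T ω - a) (ν.tilted f) s) (ω : Ω) :
    exp (f ω + s * T ω - log (∫ z, exp (f z + s * T z) ∂ν)) =
      exp (f ω - log (∫ z, exp (f z) ∂ν)) *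
        (exp (s * (T ω - a)) / mgf (fun ω => T ω - a) (ν.tilted f) s) := by
  have hmgf : mgf (fun ω => T ω - a) (ν.tilted f) s =
      (∫ z, exp (f z + s * T z) ∂ν) / (∫ z, exp (f z) ∂ν) * exp (-(s * a)) := by
    simp only [sub_eq_add_neg, ProbabilityTheory.mgf_add_const, mul_neg]
    simp only [mgf, integral_exp_tilted, Pi.add_apply]
  rw [hmgf] at hs ⊢
  have hratio := pos_of_mul_pos_left hs (exp_nonneg _)
  have hdenom : 0 < ∫ z, exp (f z) ∂ν :=
    (integral_nonneg fun _ => exp_nonneg _).lt_of_ne' (div_ne_zero_iff.mp hratio.ne').2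
  have hnum : 0 < ∫ z, exp (f z + s * T z) ∂ν := (div_pos_iff_of_pos_right hdenom).mp hratio
  rw [exp_sub, exp_sub, exp_log hnum, exp_log hdenom, mul_sub, exp_sub, exp_add, exp_neg]
  field_simp

/-- The choice `f = ⟪·, θ⟫`, `T = ⟪·, δ⟫`, `a = ⟪y, δ⟫` gives the members `θ + s • δ` of the
exponential family. -/
theorem expFam_density_limit_general {ν : Measure Ω} {f T : Ω → ℝ} {a : ℝ}
    (hf : Integrable (fun ω => exp (f ω)) ν) (hT : AEMeasurable T ν)
    (hTa : ∀ᵐ ω ∂ν, T ω ≤ a) (hpos : 0 < ν {ω | T ω = a}) (ω : Ω) :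
    (T ω < a →
      Tendsto (fun s : ℝ => exp (f ω + s * T ω - log (∫ z, exp (f z + s * T z) ∂ν)))
        atTop (𝓝 0)) ∧
    (T ω = a →
      Tendsto (fun s : ℝ => exp (f ω + s * T ω - log (∫ z, exp (f z + s * T z) ∂ν)))
        atTop (𝓝 (exp (f ω - log (∫ z, exp (f z) ∂ν)) / (ν.tilted f).real {ω | T ω = a}))) ∧
    (a < T ω →
      Tendsto (fun s : ℝ => exp (f ω + s * T ω - log (∫ z, exp (f z + s * T z) ∂ν)))
        atTop atTop) := by
  set m := mgf (fun ω => T ω - a) (ν.tilted f)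
  have hm : Tendsto m atTop (𝓝 ((ν.tilted f).real {ω | T ω = a})) := by
    have hac := tilted_absolutelyContinuous ν f
    simpa only [sub_eq_zero] using tendsto_mgf_atTop_of_ae_nonpos
      ((hT.mono_ac hac).sub_const a) (hac.ae_le (hTa.mono fun _ => sub_nonpos.mpr))
  have hlim_pos : 0 < (ν.tilted f).real {ω | T ω = a} :=
    ENNReal.toReal_pos (fun h => hpos.ne' (absolutelyContinuous_tilted hf h)) (measure_ne_top _ _)
  have hdensity := (hm.eventually_const_lt hlim_pos).mono fun s hs =>
    (exp_sub_log_integral_exp_add_mul a hs ω).symm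
  refine ⟨fun hω => .congr' hdensity ?_, fun hω => .congr' hdensity ?_,
    fun hω => .congr' hdensity ?_⟩
  · have hquot := (tendsto_exp_mul_atTop_nhds_zero (sub_neg.mpr hω)).div hm hlim_pos.ne'
    simpa only [m, Pi.div_apply, zero_div, mul_zero] using hquot.const_mul _
  · simp only [hω, sub_self, mul_zero, exp_zero, mul_one_div]
    exact tendsto_const_nhds.div hm hlim_pos.ne'
  · have hexp : Tendsto (fun s : ℝ => exp (s * (T ω - a))) atTop atTop :=
      tendsto_exp_atTop.comp (tendsto_id.atTop_mul_const (sub_pos.mpr hω))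
    exact (hexp.atTop_mul_pos (inv_pos.mpr hlim_pos) (hm.inv₀ hlim_pos.ne')).const_mul_atTop
      (exp_pos _)

end Tilting

section ExponentialFamily

variable {p : ℕ} (ν : Measure (EuclideanSpace ℝ (Fin p))) (θ : EuclideanSpace ℝ (Fin p))

lemma cumulant_eq_log_integral : cumulant ν θ = log (∫ x, exp ⟪x, θ⟫ ∂ν) := by
  rw [cumulant, partitionFn, integral_eq_lintegral_of_nonneg_ae
    (Eventually.of_forall fun _ => exp_nonneg _) (by fun_prop)]

variable {ν θ}

lemma integrable_exp_inner (hθ : partitionFn ν θ < ⊤) : Integrable (fun x => exp ⟪x, θ⟫) ν :=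
  (lintegral_ofReal_ne_top_iff_integrable (by fun_prop)
    (Eventually.of_forall fun _ => exp_nonneg _)).mp hθ.ne

lemma expFam_eq_tilted (hθ : partitionFn ν θ < ⊤) :
    expFam ν θ = ν.tilted fun x => ⟪x, θ⟫ := by
  rcases eq_zero_or_neZero ν with rfl | _
  · rw [expFam, withDensity_zero_left, tilted_zero_measure]
  · simp only [expFam, Measure.tilted, cumulant_eq_log_integral, exp_sub,
      exp_log (integral_exp_pos (integrable_exp_inner hθ))]

end ExponentialFamily

/-- Limits of the exponential family densities in a direction of recession `δ` with
`H = {x | ⟪x − y, δ⟫ = 0}` of positive `ν`-measure: as `s → ∞`, the density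
`exp(⟪x, θ + sδ⟫ − c(θ + sδ))` tends to `0` where `⟪x − y, δ⟫ < 0`, to
`exp(⟪x, θ⟫ − c(θ))/μ_θ(H)` where `⟪x − y, δ⟫ = 0`, and to `+∞` where `⟪x − y, δ⟫ > 0`. -/
theorem expFam_density_limit {p : ℕ} (hp : 0 < p)
    (ν : Measure (EuclideanSpace ℝ (Fin p))) [SigmaFinite ν] (hν : ν ≠ 0)
    (hΘ : {θ : EuclideanSpace ℝ (Fin p) | partitionFn ν θ < ⊤}.Nonempty)
    (y δ : EuclideanSpace ℝ (Fin p))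
    (hrec : ∀ᵐ x ∂ν, ⟪x - y, δ⟫ ≤ 0)
    (H : Set (EuclideanSpace ℝ (Fin p)))
    (hH : H = {x : EuclideanSpace ℝ (Fin p) | ⟪x - y, δ⟫ = 0})
    (hHpos : 0 < ν H) :
    ∀ θ : EuclideanSpace ℝ (Fin p), partitionFn ν θ < ⊤ →
      ∀ x : EuclideanSpace ℝ (Fin p),
        (⟪x - y, δ⟫ < 0 →
          Tendsto (fun s : ℝ => Real.exp (⟪x, θ + s • δ⟫ - cumulant ν (θ + s • δ)))
            atTop (𝓝 0)) ∧
        (⟪x - y, δ⟫ = 0 →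
          Tendsto (fun s : ℝ => Real.exp (⟪x, θ + s • δ⟫ - cumulant ν (θ + s • δ)))
            atTop (𝓝 (Real.exp (⟪x, θ⟫ - cumulant ν θ) / (expFam ν θ H).toReal))) ∧
        (0 < ⟪x - y, δ⟫ →
          Tendsto (fun s : ℝ => Real.exp (⟪x, θ + s • δ⟫ - cumulant ν (θ + s • δ)))
            atTop atTop) := by
  intro θ hθ x
  simp only [hH, inner_sub_left, sub_nonpos, sub_neg, sub_eq_zero, sub_pos] at hrec hHpos ⊢
  simpa only [cumulant_eq_log_integral, inner_add_right, inner_smul_right, expFam_eq_tilted hθ,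
    measureReal_def]
    using expFam_density_limit_general (integrable_exp_inner hθ) (by fun_prop) hrec hHpos x
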